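/- arXiv:0711.2895 — 9 statements merged into one kernel-verified Lean document; each statement's English description precedes it below -/
import Mathlib

section
/- Let n ≥ 1 and for each i ∈ {1,…,n} let ρ_i^0, ρ_i^1 be density matrices on ℂ^{d_i}. For x ∈ {0,1}^n let ρ^x be the tensor product state, i.e. the matrix indexed by tuples u, v ∈ ∏_i Fin(d_i) with entries ρ^x(u,v) = ∏_{i=1}^n ρ_i^{x_i}(u_i, v_i). Then the maximal guessing probability of a uniformly random x ∈ {0,1}^n from ρ^x equals the product of the individual maximal guessing probabilities: sup over POVMs (M_x)_{x∈{0,1}^n} of 2^{−n} ∑_x Tr(M_x ρ^x) = ∏_{i=1}^n [ sup over POVMs (N_0, N_1) on ℂ^{d_i} of (1/2)(Tr(N_0 ρ_i^0) + Tr(N_1 ρ_i^1)) ]. -/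
/-!
Guessing probabilities are values of a semidefinite program, and the proof is by exhibiting matching
primal and dual solutions. A *certificate* for an ensemble `(P, ρ)` is a POVM `N` together with a
matrix `K` such that `K - P x • ρ x` is positive semidefinite for every `x` and
`∑ x, P x * tr (N x * ρ x) = tr K`. For an arbitrary POVM `M` one has
`∑ x, P x * tr (M x * ρ x) ≤ ∑ x, tr (M x * K) = tr K`, so a certificate forces
`guessProb P ρ = tr K` (`guessProb_eq_of_certificate`).

For two hypotheses a certificate exists by the Holevo–Helstrom construction
(`exists_binary_certificate`): `N` projects onto the positive eigenspaces of `ρ₁ - ρ₀`, and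
`K = (ρ₀ + (ρ₁ - ρ₀)⁺) / 2`.

Certificates multiply under tensor products: the product POVM and `K = ⨂ K i` form a certificate for
the product ensemble. The only nontrivial point is that `⨂ A i ≤ ⨂ K i` whenever `0 ≤ A i ≤ K i`;
this follows by expanding `⨂ (A i + (K i - A i))` into a sum of tensor products of positive
semidefinite matrices, one of which is `⨂ A i` (`piTensor_sub_posSemidef`).
-/

open scoped BigOperators ComplexOrder

/-- The maximal probability of guessing `x` from the state `ρ x`, where `x` is
distributed according to `P`, optimized over all POVMs indexed by `X`. -/
noncomputable def guessProb {X I : Type} [Fintype X] [Fintype I] [DecidableEq I]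
    (P : X → ℝ) (ρ : X → Matrix I I ℂ) : ℝ :=
  sSup { p : ℝ | ∃ M : X → Matrix I I ℂ,
    (∀ x, (M x).PosSemidef) ∧ (∑ x, M x) = 1 ∧
    p = ∑ x, P x * ((M x * ρ x).trace).re }

open Matrix

lemma exists_unitary_diagonal {I : Type} [Fintype I] [DecidableEq I] {A : Matrix I I ℂ}
    (hA : A.IsHermitian) : ∃ U : Matrix I I ℂ, Uᴴ * U = 1 ∧ U * Uᴴ = 1 ∧
      A = U * diagonal (fun i => (hA.eigenvalues i : ℂ)) * Uᴴ := by
  refine ⟨hA.eigenvectorUnitary, ?_, ?_, ?_⟩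
  · exact Unitary.coe_star_mul_self hA.eigenvectorUnitary
  · exact Unitary.coe_mul_star_self hA.eigenvectorUnitary
  · exact hA.spectral_theorem

lemma exists_eq_conjTranspose_mul_self {I : Type} [Fintype I] [DecidableEq I] {A : Matrix I I ℂ}
    (hA : A.PosSemidef) : ∃ C : Matrix I I ℂ, A = Cᴴ * C := by
  obtain ⟨U, -, -, h⟩ := exists_unitary_diagonal hA.isHermitian
  refine ⟨diagonal (fun i => ((Real.sqrt (hA.isHermitian.eigenvalues i) : ℝ) : ℂ)) * Uᴴ, ?_⟩
  rw [conjTranspose_mul, conjTranspose_conjTranspose, diagonal_conjTranspose, mul_assoc,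
    ← mul_assoc (diagonal _), diagonal_mul_diagonal, ← mul_assoc]
  conv_lhs => rw [h]
  congr 3
  funext i
  simp only [Pi.star_apply, Complex.star_def, Complex.conj_ofReal]
  rw [← Complex.ofReal_mul, Real.mul_self_sqrt (hA.eigenvalues_nonneg i)]

lemma trace_mul_re_nonneg {I : Type} [Fintype I] [DecidableEq I] {A B : Matrix I I ℂ}
    (hA : A.PosSemidef) (hB : B.PosSemidef) : 0 ≤ (A * B).trace.re := by
  obtain ⟨C, rfl⟩ := exists_eq_conjTranspose_mul_self hA
  rw [mul_assoc, trace_mul_comm]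
  exact (Complex.le_def.1 (hB.mul_mul_conjTranspose_same C).trace_nonneg).1

/-- Weak duality plus attainment: a POVM `N` and a matrix `K` dominating every `P x • ρ x`, with
equal objective values, determine the guessing probability. -/
lemma guessProb_eq_of_certificate {X I : Type} [Fintype X] [Fintype I] [DecidableEq I]
    (P : X → ℝ) (ρ N : X → Matrix I I ℂ) (K : Matrix I I ℂ)
    (hN : ∀ x, (N x).PosSemidef) (hN1 : ∑ x, N x = 1)
    (hK : ∀ x, (K - (P x : ℂ) • ρ x).PosSemidef)
    (htr : ∑ x, (P x : ℂ) * (N x * ρ x).trace = K.trace) :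
    guessProb P ρ = K.trace.re := by
  refine IsGreatest.csSup_eq ⟨⟨N, hN, hN1, ?_⟩, ?_⟩
  · rw [← htr, Complex.re_sum]
    simp
  · rintro p ⟨M, hM, hM1, rfl⟩
    have hKM : K.trace.re = ∑ x, (M x * K).trace.re := by
      rw [← Complex.re_sum, ← trace_sum, ← Finset.sum_mul, hM1, one_mul]
    rw [hKM]
    refine Finset.sum_le_sum fun x _ => ?_
    have h := trace_mul_re_nonneg (hM x) (hK x)
    simp only [mul_sub, Matrix.mul_smul, trace_sub, trace_smul, Complex.sub_re, smul_eq_mul,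
      Complex.re_ofReal_mul] at h
    linarith

/-- Jordan decomposition of a Hermitian matrix: `N` is the projection onto the positive eigenspaces,
`N * A` is the positive part and `N * A - A` the negative part of `A`. -/
lemma exists_positive_projection {I : Type} [Fintype I] [DecidableEq I] {A : Matrix I I ℂ}
    (hA : A.IsHermitian) : ∃ N : Matrix I I ℂ, N.PosSemidef ∧ (1 - N).PosSemidef ∧
      (N * A).PosSemidef ∧ (N * A - A).PosSemidef := by
  obtain ⟨U, h1, h2, h⟩ := exists_unitary_diagonal hA
  set l := hA.eigenvalues
  have key : ∀ f : I → ℝ, (∀ i, 0 ≤ f i) →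
      (U * diagonal (fun i => (f i : ℂ)) * Uᴴ).PosSemidef := fun f hf =>
    (PosSemidef.diagonal fun i => by simpa using hf i).mul_mul_conjTranspose_same U
  have hNA : U * diagonal (fun i => ((if 0 < l i then 1 else 0 : ℝ) : ℂ)) * Uᴴ * A
      = U * diagonal (fun i => ((max (l i) 0 : ℝ) : ℂ)) * Uᴴ := by
    conv_lhs => rw [h]
    rw [show ∀ a b c d e f : Matrix I I ℂ, a * b * c * (d * e * f) = a * (b * (c * d) * e) * f from
      fun a b c d e f => by simp only [mul_assoc], h1, mul_one, diagonal_mul_diagonal]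
    congr 3
    funext i
    rw [← Complex.ofReal_mul]
    congr 1
    split_ifs with hi
    · rw [one_mul, max_eq_left hi.le]
    · rw [zero_mul, max_eq_right (not_lt.1 hi)]
  refine ⟨U * diagonal (fun i => ((if 0 < l i then 1 else 0 : ℝ) : ℂ)) * Uᴴ, ?_, ?_, ?_, ?_⟩
  · exact key _ fun i => by split_ifs <;> norm_num
  · have : (1 : Matrix I I ℂ) - U * diagonal (fun i => ((if 0 < l i then 1 else 0 : ℝ) : ℂ)) * Uᴴ
        = U * diagonal (fun i => ((1 - (if 0 < l i then 1 else 0) : ℝ) : ℂ)) * Uᴴ := by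
      have hd : diagonal (fun i => ((1 - (if 0 < l i then 1 else 0) : ℝ) : ℂ))
          = 1 - diagonal (fun i => ((if 0 < l i then 1 else 0 : ℝ) : ℂ)) := by
        rw [← diagonal_one, diagonal_sub]
        simp only [Complex.ofReal_sub, Complex.ofReal_one]
      rw [hd, mul_sub, sub_mul, mul_one, h2]
    rw [this]
    exact key _ fun i => by split_ifs <;> norm_num
  · rw [hNA]
    exact key _ fun i => le_max_right _ _
  · have : U * diagonal (fun i => ((max (l i) 0 : ℝ) : ℂ)) * Uᴴ - A
        = U * diagonal (fun i => ((max (l i) 0 - l i : ℝ) : ℂ)) * Uᴴ := by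
      have hd : diagonal (fun i => ((max (l i) 0 - l i : ℝ) : ℂ))
          = diagonal (fun i => ((max (l i) 0 : ℝ) : ℂ)) - diagonal (fun i => (l i : ℂ)) := by
        rw [diagonal_sub]
        simp only [Complex.ofReal_sub]
      rw [hd, mul_sub, sub_mul, ← h]
    rw [hNA, this]
    exact key _ fun i => sub_nonneg.2 (le_max_left _ _)

/-- Holevo–Helstrom: a certificate for discriminating two equiprobable states. -/
lemma exists_binary_certificate {I : Type} [Fintype I] [DecidableEq I] (ρ : Bool → Matrix I I ℂ)
    (hρ : ∀ b, (ρ b).PosSemidef) : ∃ (N : Bool → Matrix I I ℂ) (K : Matrix I I ℂ),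
      (∀ b, (N b).PosSemidef) ∧ ∑ b, N b = 1 ∧
      (∀ b, (K - (((1 / 2 : ℝ)) : ℂ) • ρ b).PosSemidef) ∧
      ∑ b, ((1 / 2 : ℝ) : ℂ) * (N b * ρ b).trace = K.trace := by
  obtain ⟨N, hN, hN', hp, hm⟩ :=
    exists_positive_projection ((hρ true).isHermitian.sub (hρ false).isHermitian)
  have half : (0 : ℂ) ≤ ((1 / 2 : ℝ) : ℂ) := by
    rw [Complex.zero_le_real]
    norm_num
  refine ⟨fun b => if b then N else 1 - N,
    ((1 / 2 : ℝ) : ℂ) • (ρ false + N * (ρ true - ρ false)), ?_, ?_, ?_, ?_⟩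
  · rintro (_ | _)
    · simpa using hN'
    · simpa using hN
  · simp
  · rintro (_ | _)
    · rw [← smul_sub, add_sub_cancel_left]
      exact hp.smul half
    · rw [← smul_sub, show ρ false + N * (ρ true - ρ false) - ρ true
        = N * (ρ true - ρ false) - (ρ true - ρ false) by abel]
      exact hm.smul half
  · simp only [Fintype.sum_bool, if_true, Bool.false_eq_true, if_false, trace_smul, trace_add,
      trace_sub, mul_sub, sub_mul, one_mul, smul_eq_mul]
    ring

section Tensor

variable {n : ℕ} {d : Fin n → ℕ}

/-- The tensor product `⨂ i, A i`, as a matrix indexed by tuples. -/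
def piTensor (A : (i : Fin n) → Matrix (Fin (d i)) (Fin (d i)) ℂ) :
    Matrix ((i : Fin n) → Fin (d i)) ((i : Fin n) → Fin (d i)) ℂ :=
  Matrix.of fun u v => ∏ i, A i (u i) (v i)

lemma piTensor_mul (A B : (i : Fin n) → Matrix (Fin (d i)) (Fin (d i)) ℂ) :
    piTensor A * piTensor B = piTensor fun i => A i * B i := by
  ext u v
  simp only [piTensor, mul_apply, of_apply, Fintype.prod_sum, Finset.prod_mul_distrib]

lemma piTensor_conjTranspose (A : (i : Fin n) → Matrix (Fin (d i)) (Fin (d i)) ℂ) :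
    (piTensor A)ᴴ = piTensor fun i => (A i)ᴴ := by
  ext u v
  simp [piTensor, conjTranspose_apply]

lemma piTensor_trace (A : (i : Fin n) → Matrix (Fin (d i)) (Fin (d i)) ℂ) :
    (piTensor A).trace = ∏ i, (A i).trace := by
  simp only [piTensor, trace, diag_apply, of_apply, Fintype.prod_sum]

lemma piTensor_one :
    piTensor (fun i => (1 : Matrix (Fin (d i)) (Fin (d i)) ℂ)) = 1 := by
  ext u v
  simp only [piTensor, of_apply, one_apply, Finset.prod_ite_zero, Finset.prod_const_one,
    Finset.mem_univ, true_imp_iff, funext_iff]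

lemma piTensor_smul (c : ℂ) (A : (i : Fin n) → Matrix (Fin (d i)) (Fin (d i)) ℂ) :
    piTensor (fun i => c • A i) = c ^ n • piTensor A := by
  ext u v
  simp [piTensor, Finset.prod_mul_distrib]

lemma piTensor_sum (A : (i : Fin n) → Bool → Matrix (Fin (d i)) (Fin (d i)) ℂ) :
    piTensor (fun i => ∑ b, A i b) = ∑ x : Fin n → Bool, piTensor fun i => A i (x i) := by
  ext u v
  simp only [piTensor, of_apply, Matrix.sum_apply, Fintype.prod_sum]

lemma piTensor_posSemidef {A : (i : Fin n) → Matrix (Fin (d i)) (Fin (d i)) ℂ}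
    (hA : ∀ i, (A i).PosSemidef) : (piTensor A).PosSemidef := by
  choose C hC using fun i => exists_eq_conjTranspose_mul_self (hA i)
  rw [funext hC, ← piTensor_mul, ← piTensor_conjTranspose]
  exact posSemidef_conjTranspose_mul_self _

/-- The tensor product is monotone on positive semidefinite matrices. -/
lemma piTensor_sub_posSemidef {A B : (i : Fin n) → Matrix (Fin (d i)) (Fin (d i)) ℂ}
    (hA : ∀ i, (A i).PosSemidef) (hAB : ∀ i, (B i - A i).PosSemidef) :
    (piTensor B - piTensor A).PosSemidef := by
  have hB : B = fun i => ∑ b : Bool, (if b then A i else B i - A i) := by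
    funext i
    simp
  have hsum := piTensor_sum fun i b => if b then A i else B i - A i
  rw [← hB, ← Finset.add_sum_erase _ _ (Finset.mem_univ fun _ => true)] at hsum
  simp only [if_true] at hsum
  rw [hsum, add_sub_cancel_left]
  refine posSemidef_sum _ fun x _ => piTensor_posSemidef fun i => ?_
  split_ifs
  · exact hA i
  · exact hAB i

end Tensor

theorem guessing_prob_tensor_product
    (n : ℕ) (hn : 1 ≤ n) (d : Fin n → ℕ)
    (ρ : (i : Fin n) → Bool → Matrix (Fin (d i)) (Fin (d i)) ℂ)
    (hρ : ∀ i b, (ρ i b).PosSemidef) (hρtr : ∀ i b, (ρ i b).trace = 1) :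
    guessProb (fun _ : Fin n → Bool => ((2 : ℝ) ^ n)⁻¹)
      (fun x => Matrix.of fun u v : (i : Fin n) → Fin (d i) =>
        ∏ i, ρ i (x i) (u i) (v i))
    = ∏ i, guessProb (fun _ : Bool => 1 / 2) (ρ i) := by
  choose N K hN hN1 hK htr using fun i => exists_binary_certificate (ρ i) (hρ i)
  have half : (0 : ℂ) ≤ ((1 / 2 : ℝ) : ℂ) := by
    rw [Complex.zero_le_real]
    norm_num
  have hpow : ((((2 : ℝ) ^ n)⁻¹ : ℝ) : ℂ) = ((1 / 2 : ℝ) : ℂ) ^ n := by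
    push_cast
    rw [one_div, inv_pow]
  have hKpos : ∀ i, (K i).PosSemidef := fun i => by
    simpa using (hK i true).add ((hρ i true).smul half)
  -- The traces `tr (K i)` are real, so the real part of their product is the product of real parts.
  have hre : ∀ i, ((K i).trace.re : ℂ) = (K i).trace := fun i =>
    Complex.ext rfl (Complex.le_def.1 (hKpos i).trace_nonneg).2
  have hprod : (piTensor K).trace.re = ∏ i, (K i).trace.re := by
    rw [piTensor_trace, ← Finset.prod_congr rfl fun i _ => hre i, ← Complex.ofReal_prod,
      Complex.ofReal_re]
  have hsingle : ∀ i, guessProb (fun _ : Bool => 1 / 2) (ρ i) = (K i).trace.re := fun i =>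
    guessProb_eq_of_certificate _ (ρ i) (N i) (K i) (hN i) (hN1 i) (hK i) (htr i)
  simp only [hsingle, ← hprod]
  have hN1' : ∑ x : Fin n → Bool, piTensor (fun i => N i (x i)) = 1 := by
    rw [← piTensor_sum, funext hN1, piTensor_one]
  have hK' : ∀ x : Fin n → Bool, (piTensor K - ((((2 : ℝ) ^ n)⁻¹ : ℝ) : ℂ) •
      piTensor fun i => ρ i (x i)).PosSemidef := fun x => by
    rw [hpow, ← piTensor_smul]
    exact piTensor_sub_posSemidef (fun i => (hρ i (x i)).smul half) fun i => hK i (x i)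
  have htr' : ∑ x : Fin n → Bool, ((((2 : ℝ) ^ n)⁻¹ : ℝ) : ℂ) *
      ((piTensor fun i => N i (x i)) * piTensor fun i => ρ i (x i)).trace
        = (piTensor K).trace := by
    simp only [hpow, piTensor_mul, piTensor_trace]
    rw [← Finset.prod_congr rfl fun i _ => htr i, Fintype.prod_sum]
    simp [Finset.prod_mul_distrib]
  exact guessProb_eq_of_certificate (fun _ : Fin n → Bool => ((2 : ℝ) ^ n)⁻¹)
    (fun x => piTensor fun i => ρ i (x i)) (fun x => piTensor fun i => N i (x i)) (piTensor K)
    (fun x => piTensor_posSemidef fun i => hN i (x i)) hN1' hK' htr'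
end

section
/- Let ρ_0 and ρ_1 be density matrices on ℂ^d. Then sup over pairs (M_0, M_1) of positive semidefinite d×d matrices with M_0 + M_1 = I of (1/2)(Tr(M_0 ρ_0) + Tr(M_1 ρ_1)) equals inf over Hermitian d×d matrices Q such that Q − ρ_0 and Q − ρ_1 are both positive semidefinite of (1/2)·Tr(Q). (Strong duality of the state-discrimination semidefinite program.) -/
/-!
Weak duality: if `M₀ + M₁ = 1` with `M₀, M₁ ≥ 0` and `Q ≥ ρ₀, ρ₁`, then
`Tr Q - Tr (M₀ ρ₀) - Tr (M₁ ρ₁) = Tr (M₀ (Q - ρ₀)) + Tr (M₁ (Q - ρ₁)) ≥ 0`, because the trace of a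
product of two positive semidefinite matrices is nonnegative (`re_trace_mul_nonneg`).

Attainment (Holevo–Helstrom): let `E` be the spectral projection of `ρ₀ - ρ₁` onto its positive
eigenvalues, and let `P = E (ρ₀ - ρ₁)` and `N = P - (ρ₀ - ρ₁)` be the positive and negative parts
(`exists_helstrom_projection`). The pair `(E, 1 - E)` is primal feasible, and `Q = ρ₁ + P = ρ₀ + N`
is dual feasible. Both have value `(Tr ρ₁ + Tr P) / 2`, so by weak duality this number is at once
the maximum of the primal and the minimum of the dual problem.
-/

open scoped BigOperators ComplexOrder

open scoped MatrixOrder in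
theorem re_trace_mul_nonneg {n : Type*} [Fintype n] [DecidableEq n] {A B : Matrix n n ℂ}
    (hA : A.PosSemidef) (hB : B.PosSemidef) : 0 ≤ ((A * B).trace).re := by
  obtain ⟨C, rfl⟩ := CStarAlgebra.nonneg_iff_eq_star_mul_self.mp hB.nonneg
  have h : (A * (C.conjTranspose * C)).trace = (C * A * C.conjTranspose).trace := by
    rw [← Matrix.mul_assoc, Matrix.trace_mul_comm, ← Matrix.mul_assoc]
  rw [Matrix.star_eq_conjTranspose, h]
  exact (Complex.le_def.mp (hA.mul_mul_conjTranspose_same C).trace_nonneg).1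

/-- The witness `E` is the spectral projection of the Hermitian matrix `A` onto its positive
eigenvalues, so that `E * A` and `E * A - A` are the positive and negative parts of `A`. -/
theorem exists_helstrom_projection {n : Type*} [Fintype n] [DecidableEq n] {A : Matrix n n ℂ}
    (hA : A.IsHermitian) : ∃ E : Matrix n n ℂ, E.PosSemidef ∧ (1 - E).PosSemidef ∧
      (E * A).PosSemidef ∧ (E * A - A).PosSemidef := by
  set φ := Unitary.conjStarAlgAut ℂ (Matrix n n ℂ) hA.eigenvectorUnitary with hφ
  set l := hA.eigenvalues
  have hpos : ∀ f : n → ℂ, (∀ i, 0 ≤ f i) → (φ (Matrix.diagonal f)).PosSemidef := by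
    intro f hf
    rw [hφ, Unitary.conjStarAlgAut_apply]
    exact (Matrix.PosSemidef.diagonal hf).mul_mul_conjTranspose_same _
  have hspec : A = φ (Matrix.diagonal fun i => (l i : ℂ)) := hA.spectral_theorem
  refine ⟨φ (Matrix.diagonal fun i => if 0 < l i then 1 else 0), hpos _ ?_, ?_, ?_, ?_⟩
  · intro i
    split_ifs <;> simp
  · rw [← map_one φ, ← map_sub, ← Matrix.diagonal_one, Matrix.diagonal_sub]
    refine hpos _ fun i => ?_
    split_ifs <;> simp
  · rw [hspec, ← map_mul, Matrix.diagonal_mul_diagonal]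
    refine hpos _ fun i => ?_
    split_ifs with h
    · simpa using h.le
    · simp
  · rw [hspec, ← map_mul, ← map_sub, Matrix.diagonal_mul_diagonal, Matrix.diagonal_sub]
    refine hpos _ fun i => ?_
    split_ifs with h
    · simp
    · rw [zero_mul, zero_sub, Left.nonneg_neg_iff]
      exact_mod_cast not_lt.mp h

theorem state_discrimination_sdp_duality
    (d : ℕ) (hd : 1 ≤ d) (ρ₀ ρ₁ : Matrix (Fin d) (Fin d) ℂ)
    (h₀ : ρ₀.PosSemidef) (h₁ : ρ₁.PosSemidef)
    (t₀ : ρ₀.trace = 1) (t₁ : ρ₁.trace = 1) :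
    sSup { p : ℝ | ∃ M₀ M₁ : Matrix (Fin d) (Fin d) ℂ,
        M₀.PosSemidef ∧ M₁.PosSemidef ∧ M₀ + M₁ = 1 ∧
        p = (1 / 2) * (((M₀ * ρ₀).trace).re + ((M₁ * ρ₁).trace).re) }
    = sInf { q : ℝ | ∃ Q : Matrix (Fin d) (Fin d) ℂ, Q.IsHermitian ∧
        (Q - ρ₀).PosSemidef ∧ (Q - ρ₁).PosSemidef ∧
        q = (1 / 2) * (Q.trace).re } := by
  have weak : ∀ M₀ M₁ Q : Matrix (Fin d) (Fin d) ℂ, M₀.PosSemidef → M₁.PosSemidef →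
      M₀ + M₁ = 1 → (Q - ρ₀).PosSemidef → (Q - ρ₁).PosSemidef →
      ((M₀ * ρ₀).trace).re + ((M₁ * ρ₁).trace).re ≤ (Q.trace).re := by
    intro M₀ M₁ Q hM₀ hM₁ hM hQ₀ hQ₁
    have e₀ := re_trace_mul_nonneg hM₀ hQ₀
    have e₁ := re_trace_mul_nonneg hM₁ hQ₁
    have hQ : Q.trace = (M₀ * Q).trace + (M₁ * Q).trace := by
      rw [← Matrix.trace_add, ← Matrix.add_mul, hM, Matrix.one_mul]
    rw [hQ, Complex.add_re]
    simp only [Matrix.mul_sub, Matrix.trace_sub, Complex.sub_re] at e₀ e₁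
    linarith
  obtain ⟨E, hE, hE', hP, hN⟩ := exists_helstrom_projection (h₀.isHermitian.sub h₁.isHermitian)
  have hQ₀ : (ρ₁ + E * (ρ₀ - ρ₁) - ρ₀).PosSemidef := by
    convert hN using 1
    abel
  have hQ₁ : (ρ₁ + E * (ρ₀ - ρ₁) - ρ₁).PosSemidef := by
    rwa [add_sub_cancel_left]
  have hval : ((E * ρ₀).trace).re + (((1 - E) * ρ₁).trace).re
      = ((ρ₁ + E * (ρ₀ - ρ₁)).trace).re := by
    rw [← Complex.add_re, ← Matrix.trace_add]
    congr 2
    noncomm_ring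
  have hmax : IsGreatest { p : ℝ | ∃ M₀ M₁ : Matrix (Fin d) (Fin d) ℂ,
        M₀.PosSemidef ∧ M₁.PosSemidef ∧ M₀ + M₁ = 1 ∧
        p = (1 / 2) * (((M₀ * ρ₀).trace).re + ((M₁ * ρ₁).trace).re) }
      ((1 / 2) * ((ρ₁ + E * (ρ₀ - ρ₁)).trace).re) := by
    refine ⟨⟨E, 1 - E, hE, hE', add_sub_cancel _ _, by rw [hval]⟩, ?_⟩
    rintro p ⟨M₀, M₁, hM₀, hM₁, hM, rfl⟩
    have := weak M₀ M₁ _ hM₀ hM₁ hM hQ₀ hQ₁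
    linarith
  have hmin : IsLeast { q : ℝ | ∃ Q : Matrix (Fin d) (Fin d) ℂ, Q.IsHermitian ∧
        (Q - ρ₀).PosSemidef ∧ (Q - ρ₁).PosSemidef ∧ q = (1 / 2) * (Q.trace).re }
      ((1 / 2) * ((ρ₁ + E * (ρ₀ - ρ₁)).trace).re) := by
    refine ⟨⟨_, h₁.isHermitian.add hP.isHermitian, hQ₀, hQ₁, rfl⟩, ?_⟩
    rintro q ⟨Q, -, hQ₀', hQ₁', rfl⟩
    have := weak E (1 - E) Q hE hE' (add_sub_cancel _ _) hQ₀' hQ₁'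
    linarith
  rw [hmax.csSup_eq, hmin.csInf_eq]
end

section
/- Let S be a quantum channel from qubits to ℂ^d given in Kraus form: S(ρ) = ∑_{k∈K} A_k ρ A_k† for a finite family of d×2 complex matrices (A_k) with ∑_k A_k† A_k = I_2. Suppose that for both bases b ∈ {+,×}, the states S(σ_{0,b}) and S(σ_{1,b}) are perfectly distinguishable, i.e. sup over pairs (M_0, M_1) of positive semidefinite d×d matrices with M_0 + M_1 = I of (1/2)(Tr(M_0 S(σ_{0,b})) + Tr(M_1 S(σ_{1,b}))) = 1. Then S is reversible: there exists a finite family (B_j) of 2×d complex matrices with ∑_j B_j† B_j = I_d such that for every 2×2 complex matrix ρ, ∑_j B_j S(ρ) B_j† = ρ. -/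
/-!
Perfect distinguishability of two output states forces the supports of the outputs to be orthogonal
(`orthogonal_of_distProb_eq_one`). For both bases this says that `⟨0|A_kᴴ A_l|1⟩ = 0` and
`⟨+|A_kᴴ A_l|-⟩ = 0` for all `k`, `l`, so `A_kᴴ A_l = c_{kl} • 1` (`knill_laflamme`) with `c` positive
semidefinite of trace one.

This is the Knill–Laflamme condition of quantum error correction. Diagonalising `c = U D Uᴴ` and
setting `F_j = ∑ k, U_{kj} A_k` gives `F_iᴴ F_j = δ_{ij} D_j`: each `F_j` is a scaled isometry, and
their ranges are pairwise orthogonal. The recovery measures which range the state lies in and undoes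
the corresponding isometry (`recovery_of_orthogonal`).
-/

open scoped BigOperators ComplexOrder Matrix

/-- BB84 state `|0⟩⟨0|`. -/
noncomputable def σ0p : Matrix (Fin 2) (Fin 2) ℂ := !![1, 0; 0, 0]
/-- BB84 state `|1⟩⟨1|`. -/
noncomputable def σ1p : Matrix (Fin 2) (Fin 2) ℂ := !![0, 0; 0, 1]
/-- BB84 state `|+⟩⟨+|`. -/
noncomputable def σ0x : Matrix (Fin 2) (Fin 2) ℂ := !![1/2, 1/2; 1/2, 1/2]
/-- BB84 state `|−⟩⟨−|`. -/
noncomputable def σ1x : Matrix (Fin 2) (Fin 2) ℂ := !![1/2, -(1/2); -(1/2), 1/2]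

/-- The optimal probability of discriminating the states `τ₀` and `τ₁` (with
equal priors), optimized over all two-outcome POVMs `(M₀, M₁)`. -/
noncomputable def distProb {d : ℕ} (τ₀ τ₁ : Matrix (Fin d) (Fin d) ℂ) : ℝ :=
  sSup { p : ℝ | ∃ M₀ M₁ : Matrix (Fin d) (Fin d) ℂ,
    M₀.PosSemidef ∧ M₁.PosSemidef ∧ M₀ + M₁ = 1 ∧
    p = (1 / 2) * (((M₀ * τ₀).trace).re + ((M₁ * τ₁).trace).re) }

open scoped MatrixOrder Matrix.Norms.L2Operator in
theorem posSemidef_eq_conjTranspose_mul_self {d : ℕ} {M : Matrix (Fin d) (Fin d) ℂ} (hM : M.PosSemidef) :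
    ∃ N : Matrix (Fin d) (Fin d) ℂ, M = Nᴴ * N := by
  obtain ⟨N, hN⟩ := CStarAlgebra.nonneg_iff_eq_star_mul_self.mp hM.nonneg
  exact ⟨N, hN⟩

theorem star_dotProduct_gram_mulVec {d : ℕ} (N : Matrix (Fin d) (Fin d) ℂ) (u w : Fin d → ℂ) :
    star u ⬝ᵥ ((Nᴴ * N) *ᵥ w) = inner ℂ (WithLp.toLp 2 (N *ᵥ u)) (WithLp.toLp 2 (N *ᵥ w)) := by
  rw [EuclideanSpace.inner_toLp_toLp, dotProduct_comm (N *ᵥ w), Matrix.star_mulVec,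
    ← Matrix.dotProduct_mulVec, Matrix.mulVec_mulVec]

theorem trace_mul_sum_vecMulVec_re {d m : ℕ} (N : Matrix (Fin d) (Fin d) ℂ)
    (u : Fin m → Fin d → ℂ) :
    ((Nᴴ * N * ∑ k, Matrix.vecMulVec (u k) (star (u k))).trace).re
      = ∑ k, ‖WithLp.toLp 2 (N *ᵥ u k)‖ ^ 2 := by
  rw [Matrix.mul_sum, Matrix.trace_sum, Complex.re_sum]
  refine Finset.sum_congr rfl fun k _ => ?_
  rw [Matrix.mul_vecMulVec, Matrix.trace_vecMulVec, dotProduct_comm,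
    star_dotProduct_gram_mulVec, inner_self_eq_norm_sq_to_K]
  norm_cast

/-- If two ensembles of total weight one are perfectly distinguishable, every vector of the first is
orthogonal to every vector of the second. The supremum need not be known to be attained: a
measurement `M₀ = N₀ᴴ N₀`, `M₁ = N₁ᴴ N₁` of success probability above `1 - δ² / 2` gives
`|⟨u, w⟩| ≤ ‖N₀ u‖ ‖N₀ w‖ + ‖N₁ u‖ ‖N₁ w‖ ≤ 2 δ` by Cauchy–Schwarz. -/
theorem orthogonal_of_distProb_eq_one {d m : ℕ} (u w : Fin m → Fin d → ℂ)
    (hu : ∑ k, star (u k) ⬝ᵥ u k = 1) (hw : ∑ k, star (w k) ⬝ᵥ w k = 1)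
    (h : distProb (∑ k, Matrix.vecMulVec (u k) (star (u k)))
      (∑ k, Matrix.vecMulVec (w k) (star (w k))) = 1) (k l : Fin m) :
    star (u k) ⬝ᵥ w l = 0 := by
  have key : ∀ δ : ℝ, 0 < δ → ‖star (u k) ⬝ᵥ w l‖ ≤ 2 * δ := by
    intro δ hδ
    unfold distProb at h
    obtain ⟨p, ⟨M₀, M₁, h₀, h₁, hM, hp⟩, hlt⟩ := exists_lt_of_lt_csSup
      (Set.nonempty_iff_ne_empty.mpr fun hempty => by
        rw [hempty, Real.sSup_empty] at h; exact zero_ne_one h)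
      (h.symm ▸ (by linarith [pow_pos hδ 2] : 1 - δ ^ 2 / 2 < 1))
    obtain ⟨N₀, rfl⟩ := posSemidef_eq_conjTranspose_mul_self h₀
    obtain ⟨N₁, rfl⟩ := posSemidef_eq_conjTranspose_mul_self h₁
    rw [trace_mul_sum_vecMulVec_re, trace_mul_sum_vecMulVec_re] at hp
    have split : ∀ a b : Fin d → ℂ, star a ⬝ᵥ b =
        inner ℂ (WithLp.toLp 2 (N₀ *ᵥ a)) (WithLp.toLp 2 (N₀ *ᵥ b)) +
        inner ℂ (WithLp.toLp 2 (N₁ *ᵥ a)) (WithLp.toLp 2 (N₁ *ᵥ b)) := by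
      intro a b
      rw [← star_dotProduct_gram_mulVec, ← star_dotProduct_gram_mulVec, ← dotProduct_add,
        ← Matrix.add_mulVec, hM, Matrix.one_mulVec]
    have total : ∀ v : Fin m → Fin d → ℂ, ∑ k, star (v k) ⬝ᵥ v k = 1 →
        ∑ k, ‖WithLp.toLp 2 (N₀ *ᵥ v k)‖ ^ 2 + ∑ k, ‖WithLp.toLp 2 (N₁ *ᵥ v k)‖ ^ 2 = 1 := by
      intro v hv
      simp only [split, inner_self_eq_norm_sq_to_K, Finset.sum_add_distrib] at hv
      have hv' := congrArg Complex.re hv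
      norm_cast at hv'
    have tu := total u hu
    have tw := total w hw
    have single : ∀ (N : Matrix (Fin d) (Fin d) ℂ) (v : Fin m → Fin d → ℂ) (j : Fin m),
        ‖WithLp.toLp 2 (N *ᵥ v j)‖ ^ 2 ≤ ∑ k, ‖WithLp.toLp 2 (N *ᵥ v k)‖ ^ 2 := fun N v j =>
      Finset.single_le_sum (f := fun k => ‖WithLp.toLp 2 (N *ᵥ v k)‖ ^ 2)
        (fun _ _ => sq_nonneg _) (Finset.mem_univ j)
    have nonneg : ∀ (N : Matrix (Fin d) (Fin d) ℂ) (v : Fin m → Fin d → ℂ),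
        0 ≤ ∑ k, ‖WithLp.toLp 2 (N *ᵥ v k)‖ ^ 2 := fun N v =>
      Finset.sum_nonneg fun _ _ => sq_nonneg _
    have n0u := nonneg N₀ u
    have n1u := nonneg N₁ u
    have n0w := nonneg N₀ w
    have n1w := nonneg N₁ w
    have b0u : ‖WithLp.toLp 2 (N₀ *ᵥ u k)‖ ≤ 1 :=
      le_of_sq_le_sq (by linarith [single N₀ u k]) zero_le_one
    have b1u : ‖WithLp.toLp 2 (N₁ *ᵥ u k)‖ ≤ δ :=
      le_of_sq_le_sq (by linarith [single N₁ u k]) hδ.le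
    have b0w : ‖WithLp.toLp 2 (N₀ *ᵥ w l)‖ ≤ δ :=
      le_of_sq_le_sq (by linarith [single N₀ w l]) hδ.le
    have b1w : ‖WithLp.toLp 2 (N₁ *ᵥ w l)‖ ≤ 1 :=
      le_of_sq_le_sq (by linarith [single N₁ w l]) zero_le_one
    rw [split]
    calc _ ≤ _ := norm_add_le _ _
      _ ≤ _ := add_le_add (norm_inner_le_norm _ _) (norm_inner_le_norm _ _)
      _ ≤ 1 * δ + δ * 1 := by gcongr
      _ = 2 * δ := by ring
  by_contra hne
  have := key (‖star (u k) ⬝ᵥ w l‖ / 4) (by positivity)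
  linarith [norm_pos_iff.mpr hne]

/-- The orthogonality produced by a perfectly distinguishable pair of pure inputs `v`, `v'`. -/
theorem channel_orthogonal {d m : ℕ} (A : Fin m → Matrix (Fin d) (Fin 2) ℂ)
    (hA : ∑ k, (A k)ᴴ * A k = 1) (v v' : Fin 2 → ℂ)
    (hv : star v ⬝ᵥ v = 1) (hv' : star v' ⬝ᵥ v' = 1)
    (h : distProb (∑ k, A k * Matrix.vecMulVec v (star v) * (A k)ᴴ)
      (∑ k, A k * Matrix.vecMulVec v' (star v') * (A k)ᴴ) = 1) (k l : Fin m) :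
    star v ⬝ᵥ (((A k)ᴴ * A l) *ᵥ v') = 0 := by
  have weight : ∀ x : Fin 2 → ℂ, star x ⬝ᵥ x = 1 →
      ∑ k, star (A k *ᵥ x) ⬝ᵥ (A k *ᵥ x) = 1 := by
    intro x hx
    simp only [Matrix.star_mulVec, ← Matrix.dotProduct_mulVec, Matrix.mulVec_mulVec]
    rw [← dotProduct_sum, ← Matrix.sum_mulVec, hA, Matrix.one_mulVec, hx]
  simp only [Matrix.mul_vecMulVec, Matrix.vecMulVec_mul, ← Matrix.star_mulVec] at h
  have := orthogonal_of_distProb_eq_one _ _ (weight v hv) (weight v' hv') h k l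
  rwa [Matrix.star_mulVec, ← Matrix.dotProduct_mulVec, Matrix.mulVec_mulVec] at this

/-- The Knill–Laflamme condition: the products `A_kᴴ A_l` are scalar, because in the basis
`|0⟩, |1⟩` their off-diagonal entries vanish, and testing on `|±⟩` equates the diagonal ones. -/
theorem knill_laflamme {d m : ℕ} (A : Fin m → Matrix (Fin d) (Fin 2) ℂ)
    (hA : ∑ k, (A k)ᴴ * A k = 1)
    (hplus : distProb (∑ k, A k * σ0p * (A k)ᴴ) (∑ k, A k * σ1p * (A k)ᴴ) = 1)
    (htimes : distProb (∑ k, A k * σ0x * (A k)ᴴ) (∑ k, A k * σ1x * (A k)ᴴ) = 1)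
    (k l : Fin m) :
    (A k)ᴴ * A l = (((A k)ᴴ * A l) 0 0) • (1 : Matrix (Fin 2) (Fin 2) ℂ) := by
  obtain ⟨r, hr, hrr⟩ : ∃ r : ℂ, star r = r ∧ r * r = 1 / 2 := by
    refine ⟨((Real.sqrt 2)⁻¹ : ℝ), Complex.conj_ofReal _, ?_⟩
    rw [← Complex.ofReal_mul, ← mul_inv, Real.mul_self_sqrt zero_le_two]
    norm_num
  have hr' : (starRingEnd ℂ) r = r := hr
  have hr0 : r ≠ 0 := by rintro rfl; norm_num at hrr
  have e0p : σ0p = Matrix.vecMulVec ![1, 0] (star ![1, 0]) := by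
    ext i j; fin_cases i <;> fin_cases j <;> simp [σ0p, Matrix.vecMulVec_apply]
  have e1p : σ1p = Matrix.vecMulVec ![0, 1] (star ![0, 1]) := by
    ext i j; fin_cases i <;> fin_cases j <;> simp [σ1p, Matrix.vecMulVec_apply]
  have e0x : σ0x = Matrix.vecMulVec ![r, r] (star ![r, r]) := by
    ext i j; fin_cases i <;> fin_cases j <;>
      simp [σ0x, Matrix.vecMulVec_apply, -Complex.star_def, hr, hrr]
  have e1x : σ1x = Matrix.vecMulVec ![r, -r] (star ![r, -r]) := by
    ext i j; fin_cases i <;> fin_cases j <;>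
      simp [σ1x, Matrix.vecMulVec_apply, -Complex.star_def, hr, hrr]
  have hp := channel_orthogonal A hA _ _ (by simp [dotProduct]) (by simp [dotProduct]) (e0p ▸ e1p ▸ hplus)
  have hx := channel_orthogonal A hA ![r, r] ![r, -r]
    (by simp [dotProduct, hr', hrr]; norm_num)
    (by simp [dotProduct, hr', hrr]; norm_num) (e0x ▸ e1x ▸ htimes) k l
  have h01 : ((A k)ᴴ * A l) 0 1 = 0 := by
    simpa [Matrix.mulVec, dotProduct] using hp k l
  have h10 : ((A k)ᴴ * A l) 1 0 = 0 := by
    have hc : ((A l)ᴴ * A k) 0 1 = 0 := by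
      simpa [Matrix.mulVec, dotProduct] using hp l k
    have : (A k)ᴴ * A l = ((A l)ᴴ * A k)ᴴ := by simp
    rw [this, Matrix.conjTranspose_apply, hc, star_zero]
  have h11 : ((A k)ᴴ * A l) 1 1 = ((A k)ᴴ * A l) 0 0 := by
    generalize (A k)ᴴ * A l = X at *
    simp [Matrix.mulVec, dotProduct, Fin.sum_univ_two, hr', h01, h10] at hx
    have : r * r * (X 0 0 - X 1 1) = 0 := by linear_combination hx
    exact (sub_eq_zero.mp ((mul_eq_zero.mp this).resolve_left (mul_ne_zero hr0 hr0))).symm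
  ext i j
  fin_cases i <;> fin_cases j <;> simp [h01, h10, h11]

/-- The explicit recovery channel for Kraus operators that are a unitary mixture of scaled isometries
`F_j` with pairwise orthogonal ranges. Its Kraus operators are `D_j^{-1/2} F_jᴴ`, together
with operators that send the orthogonal complement of the ranges to `|0⟩`. -/
theorem recovery_of_orthogonal {d m : ℕ} (A F : Fin m → Matrix (Fin d) (Fin 2) ℂ)
    (D : Fin m → ℝ) (U : Matrix (Fin m) (Fin m) ℂ) (hD : ∀ j, 0 ≤ D j) (hD1 : ∑ j, D j = 1)
    (hF : ∀ i j, (F i)ᴴ * F j = if i = j then (D j : ℂ) • 1 else 0)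
    (hU : Uᴴ * U = 1) (hAF : ∀ k, A k = ∑ j, star (U k j) • F j) :
    ∃ (m' : ℕ) (B : Fin m' → Matrix (Fin 2) (Fin d) ℂ),
      (∑ j, (B j)ᴴ * B j = 1) ∧
      ∀ ρ : Matrix (Fin 2) (Fin 2) ℂ,
        ∑ j, B j * (∑ k, A k * ρ * (A k)ᴴ) * (B j)ᴴ = ρ := by
  -- `s j = D_j^{-1/2}`, which is `0` when `D_j = 0`; then `F j = 0` as well.
  set s : Fin m → ℝ := fun j => (Real.sqrt (D j))⁻¹ with hs
  have hssD : ∀ j, s j * s j * D j * D j = D j := by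
    intro j
    have : s j * s j = (D j)⁻¹ := by rw [hs, ← mul_inv, Real.mul_self_sqrt (hD j)]
    rw [this]
    by_cases h0 : D j = 0
    · simp [h0]
    · field_simp
  have hssF : ∀ j, ((s j * s j * D j : ℝ) : ℂ) • F j = F j := by
    intro j
    by_cases h0 : D j = 0
    · have : F j = 0 := by
        rw [← Matrix.conjTranspose_mul_self_eq_zero, hF]
        simp [h0]
      simp [this]
    · have : s j * s j * D j = 1 := mul_right_cancel₀ h0 (by rw [hssD, one_mul])
      simp [this]
  set P : Matrix (Fin d) (Fin d) ℂ := ∑ j, ((s j * s j : ℝ) : ℂ) • (F j * (F j)ᴴ) with hP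
  have hPF : ∀ j, P * F j = F j := by
    intro j
    rw [hP, Matrix.sum_mul]
    simp only [Matrix.smul_mul, Matrix.mul_assoc, hF]
    rw [Finset.sum_eq_single j]
    · conv_rhs => rw [← hssF j]
      rw [if_pos rfl, Matrix.mul_smul, Matrix.mul_one, smul_smul, ← Complex.ofReal_mul]
    · intro i _ hij
      simp [hij]
    · simp
  have hPA : ∀ k, P * A k = A k := by
    intro k
    rw [hAF, Matrix.mul_sum]
    simp [hPF]
  have hPH : Pᴴ = P := by
    simp [hP, Matrix.conjTranspose_sum, Matrix.conjTranspose_smul]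
  have hPP : P * P = P := by
    conv_lhs => rw [hP, Matrix.mul_sum]
    rw [hP]
    simp only [Matrix.mul_smul, ← Matrix.mul_assoc]
    simp only [← hP, hPF]
  let B : Fin m ⊕ Fin d → Matrix (Fin 2) (Fin d) ℂ :=
    Sum.elim (fun j => (s j : ℂ) • (F j)ᴴ) (fun i => Matrix.single (0 : Fin 2) i (1 : ℂ) * (1 - P))
  have hBl : ∀ j k, B (Sum.inl j) * A k = (s j * D j * star (U k j) : ℂ) • 1 := by
    intro j k
    simp only [B, Sum.elim_inl]
    rw [hAF, Matrix.mul_sum, Finset.sum_eq_single j]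
    · rw [Matrix.smul_mul, Matrix.mul_smul, hF, if_pos rfl, smul_smul, smul_smul]
      congr 1
      ring
    · intro i _ hij
      simp [hF, hij.symm]
    · simp
  have hBr : ∀ i k, B (Sum.inr i) * A k = 0 := by
    intro i k
    simp only [B, Sum.elim_inr]
    rw [Matrix.mul_assoc, Matrix.sub_mul, hPA]
    simp
  have hBsum : ∑ x, (B x)ᴴ * B x = 1 := by
    rw [Fintype.sum_sum_type]
    have h1 : ∑ j, (B (Sum.inl j))ᴴ * B (Sum.inl j) = P := by
      rw [hP]
      refine Finset.sum_congr rfl fun j _ => ?_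
      simp only [B, Sum.elim_inl, Matrix.conjTranspose_smul, Matrix.conjTranspose_conjTranspose,
        Matrix.smul_mul, Matrix.mul_smul, smul_smul, Complex.star_def, Complex.conj_ofReal,
        Complex.ofReal_mul]
    have h2 : ∑ i, (B (Sum.inr i))ᴴ * B (Sum.inr i) = (1 - P)ᴴ * (1 - P) := by
      have : ∀ i, (B (Sum.inr i))ᴴ * B (Sum.inr i)
          = (1 - P)ᴴ * Matrix.single i i 1 * (1 - P) := by
        intro i
        simp only [B, Sum.elim_inr, Matrix.conjTranspose_mul, Matrix.conjTranspose_single, star_one]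
        rw [Matrix.mul_assoc, ← Matrix.mul_assoc (Matrix.single i (0 : Fin 2) (1 : ℂ)),
          Matrix.single_mul_single_same, mul_one, ← Matrix.mul_assoc]
      simp only [this]
      rw [← Matrix.sum_mul, ← Matrix.mul_sum, Matrix.sum_single_one, Matrix.mul_one]
    rw [h1, h2, Matrix.conjTranspose_sub, Matrix.conjTranspose_one, hPH, Matrix.mul_sub,
      Matrix.sub_mul, Matrix.sub_mul, hPP]
    simp
  have hBrec : ∀ ρ : Matrix (Fin 2) (Fin 2) ℂ,
      ∑ x, B x * (∑ k, A k * ρ * (A k)ᴴ) * (B x)ᴴ = ρ := by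
    intro ρ
    have expand : ∀ x, B x * (∑ k, A k * ρ * (A k)ᴴ) * (B x)ᴴ
        = ∑ k, (B x * A k) * ρ * (B x * A k)ᴴ := by
      intro x
      rw [Matrix.mul_sum, Matrix.sum_mul]
      simp only [Matrix.conjTranspose_mul, Matrix.mul_assoc]
    have hcol : ∀ j, ∑ k, star (U k j) * U k j = 1 := by
      intro j
      have := congrFun (congrFun hU j) j
      simpa [Matrix.mul_apply] using this
    simp only [expand, Fintype.sum_sum_type, hBl, hBr]
    have hscal : ∀ j k, ((s j * D j * star (U k j) : ℂ) • (1 : Matrix (Fin 2) (Fin 2) ℂ)) * ρ *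
        ((s j * D j * star (U k j) : ℂ) • (1 : Matrix (Fin 2) (Fin 2) ℂ))ᴴ
        = ((D j : ℂ) * (star (U k j) * U k j)) • ρ := by
      intro j k
      have h' : (s j * s j * D j * D j : ℂ) = D j := by exact_mod_cast hssD j
      rw [Matrix.conjTranspose_smul, Matrix.conjTranspose_one, Matrix.smul_mul, Matrix.one_mul,
        Matrix.smul_mul, Matrix.mul_smul, Matrix.mul_one, smul_smul]
      congr 1
      simp only [star_mul', Complex.star_def, Complex.conj_ofReal, Complex.conj_conj]
      linear_combination ((starRingEnd ℂ) (U k j) * U k j) * h'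
    simp only [hscal, ← Finset.sum_smul, ← Finset.mul_sum, hcol, mul_one]
    have : (∑ j, (D j : ℂ)) = 1 := by exact_mod_cast hD1
    simp [this]
  let e := Fintype.equivFin (Fin m ⊕ Fin d)
  refine ⟨_, fun x => B (e.symm x), ?_, fun ρ => ?_⟩
  · rw [← hBsum]
    exact Equiv.sum_comp e.symm fun x => (B x)ᴴ * B x
  · conv_rhs => rw [← hBrec ρ]
    exact Equiv.sum_comp e.symm fun x => B x * (∑ k, A k * ρ * (A k)ᴴ) * (B x)ᴴ

theorem perfect_distinguishability_implies_reversible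
    (d m : ℕ) (A : Fin m → Matrix (Fin d) (Fin 2) ℂ)
    (hA : ∑ k, (A k)ᴴ * A k = 1)
    (hplus : distProb (∑ k, A k * σ0p * (A k)ᴴ) (∑ k, A k * σ1p * (A k)ᴴ) = 1)
    (htimes : distProb (∑ k, A k * σ0x * (A k)ᴴ) (∑ k, A k * σ1x * (A k)ᴴ) = 1) :
    ∃ (m' : ℕ) (B : Fin m' → Matrix (Fin 2) (Fin d) ℂ),
      (∑ j, (B j)ᴴ * B j = 1) ∧
      ∀ ρ : Matrix (Fin 2) (Fin 2) ℂ,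
        ∑ j, B j * (∑ k, A k * ρ * (A k)ᴴ) * (B j)ᴴ = ρ := by
  have hKL := knill_laflamme A hA hplus htimes
  set c : Matrix (Fin m) (Fin m) ℂ := Matrix.of fun k l => ((A k)ᴴ * A l) 0 0 with hc
  have hKL' : ∀ k l, (A k)ᴴ * A l = c k l • (1 : Matrix (Fin 2) (Fin 2) ℂ) := hKL
  -- `c` is the Gram matrix of the first columns of the Kraus operators.
  have hpos : c.PosSemidef := by
    have : c = (Matrix.of fun (i : Fin d) (k : Fin m) => A k i 0)ᴴ *
        (Matrix.of fun (i : Fin d) (k : Fin m) => A k i 0) := by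
      ext k l
      simp [hc, Matrix.mul_apply]
    rw [this]
    exact Matrix.posSemidef_conjTranspose_mul_self _
  have htr : c.trace = 1 := by
    have := congrFun (congrFun hA 0) 0
    simpa [Matrix.sum_apply, Matrix.trace, hc] using this
  have hH := hpos.isHermitian
  set U : Matrix (Fin m) (Fin m) ℂ := (hH.eigenvectorUnitary).1 with hU
  have hUU : Uᴴ * U = 1 := Unitary.coe_star_mul_self hH.eigenvectorUnitary
  have hUU' : U * Uᴴ = 1 := Unitary.coe_mul_star_self hH.eigenvectorUnitary
  have hdiag : Uᴴ * c * U = Matrix.diagonal (fun j => (hH.eigenvalues j : ℂ)) := by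
    have := hH.conjStarAlgAut_star_eigenvectorUnitary
    rw [Unitary.conjStarAlgAut_star_apply] at this
    exact this
  refine recovery_of_orthogonal A (fun j => ∑ k, U k j • A k) hH.eigenvalues U
    hpos.eigenvalues_nonneg ?_ ?_ hUU ?_
  · have := hH.trace_eq_sum_eigenvalues
    rw [htr] at this
    have hre := congrArg Complex.re this.symm
    norm_cast at hre
  · intro i j
    have hij := congrFun (congrFun hdiag i) j
    have : (∑ k, U k i • A k)ᴴ * (∑ l, U l j • A l)
        = ((Uᴴ * c * U) i j) • (1 : Matrix (Fin 2) (Fin 2) ℂ) := by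
      simp only [Matrix.conjTranspose_sum, Matrix.conjTranspose_smul, Matrix.mul_sum,
        Matrix.sum_mul, Matrix.smul_mul, Matrix.mul_smul, hKL', smul_smul, Matrix.mul_apply,
        Finset.smul_sum, Finset.sum_mul, Finset.sum_smul, Matrix.conjTranspose_apply]
      refine Finset.sum_congr rfl fun l _ => Finset.sum_congr rfl fun k _ => ?_
      congr 1
      ring
    rw [this, hij, Matrix.diagonal_apply]
    split_ifs with h
    · rw [h]
    · simp
  · intro k
    have hrow : ∀ l, ∑ j, star (U k j) * U l j = (1 : Matrix (Fin m) (Fin m) ℂ) l k := by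
      intro l
      rw [← hUU', Matrix.mul_apply]
      exact Finset.sum_congr rfl fun j _ => by rw [Matrix.conjTranspose_apply, mul_comm]
    simp only [Finset.smul_sum, smul_smul]
    rw [Finset.sum_comm]
    simp only [← Finset.sum_smul, hrow, Matrix.one_apply, ite_smul, one_smul, zero_smul]
    simp
end

section
/- Let n ≥ 1, let p ∈ ℝ with 1/2 ≤ p ≤ 1, and let p_1, …, p_n ∈ ℝ satisfy 1/2 ≤ p_i ≤ 1 for all i and ∏_{i=1}^n p_i ≤ p^n. Then (1/2^n) · ∏_{i=1}^n (1 + p_i) ≤ p^{λ n}, where λ = log₂(4/3). -/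
open scoped BigOperators

/-!
Put `r = log₂ (4/3) ∈ [0, 1]`. The function `x ↦ x ^ r` is concave and agrees with the affine
function `(1 + x) / 2` at `x = 1/2` and at `x = 1`, so `(1 + x) / 2 ≤ x ^ r` on `[1/2, 1]`
(`half_one_add_le_rpow`). Multiplying over all factors bounds the left-hand side by
`(∏ i, q i) ^ r`, and monotonicity of `x ↦ x ^ r` together with `∏ i, q i ≤ p ^ n` finishes.
-/

lemma logb_four_thirds_nonneg : 0 ≤ Real.logb 2 (4 / 3) :=
  Real.logb_nonneg (by norm_num) (by norm_num)

lemma logb_four_thirds_le_one : Real.logb 2 (4 / 3) ≤ 1 := by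
  rw [Real.logb_le_iff_le_rpow (by norm_num) (by norm_num)]
  norm_num

/-- The chord of `x ↦ x ^ log₂ (4/3)` over `[1/2, 1]` is `x ↦ (1 + x) / 2`; by concavity it lies
below the graph. -/
lemma half_one_add_le_rpow {x : ℝ} (hx : 1 / 2 ≤ x) (hx1 : x ≤ 1) :
    (1 + x) / 2 ≤ x ^ Real.logb 2 (4 / 3) := by
  have hc := (Real.concaveOn_rpow logb_four_thirds_nonneg logb_four_thirds_le_one).2
    (show (1 / 2 : ℝ) ∈ Set.Ici 0 by norm_num) (show (1 : ℝ) ∈ Set.Ici 0 by norm_num)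
    (show 0 ≤ 2 - 2 * x by linarith) (show 0 ≤ 2 * x - 1 by linarith) (by ring)
  have hhalf : (1 / 2 : ℝ) ^ Real.logb 2 (4 / 3) = 3 / 4 := by
    rw [Real.div_rpow (by norm_num) (by norm_num), Real.one_rpow,
      Real.rpow_logb (by norm_num) (by norm_num) (by norm_num)]
    norm_num
  have hpt : (2 - 2 * x) * (1 / 2) + (2 * x - 1) * 1 = x := by ring
  simp only [smul_eq_mul, hhalf, Real.one_rpow, hpt] at hc
  linarith

theorem product_distribution_bound
    (n : ℕ) (hn : 1 ≤ n) (p : ℝ) (hp : 1 / 2 ≤ p) (hp1 : p ≤ 1)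
    (q : Fin n → ℝ) (hq : ∀ i, 1 / 2 ≤ q i) (hq1 : ∀ i, q i ≤ 1)
    (hprod : ∏ i, q i ≤ p ^ n) :
    (1 / 2 ^ n) * ∏ i, (1 + q i) ≤ p ^ (Real.logb 2 (4 / 3) * n) := by
  have hq0 : ∀ i, 0 ≤ q i := fun i => by linarith [hq i]
  calc (1 / 2 ^ n) * ∏ i, (1 + q i) = ∏ i, ((1 + q i) / 2) := by
        rw [Finset.prod_div_distrib, Finset.prod_const, Finset.card_univ, Fintype.card_fin]
        ring
    _ ≤ ∏ i, q i ^ Real.logb 2 (4 / 3) :=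
        Finset.prod_le_prod (fun i _ => by linarith [hq0 i])
          (fun i _ => half_one_add_le_rpow (hq i) (hq1 i))
    _ = (∏ i, q i) ^ Real.logb 2 (4 / 3) :=
        Real.finsetProd_rpow _ _ (fun i _ => hq0 i) _
    _ ≤ (p ^ n) ^ Real.logb 2 (4 / 3) :=
        Real.rpow_le_rpow (Finset.prod_nonneg fun i _ => hq0 i) hprod logb_four_thirds_nonneg
    _ = p ^ (Real.logb 2 (4 / 3) * n) := by
        rw [mul_comm, Real.rpow_mul (by linarith), Real.rpow_natCast]
end

section
/- Let λ = log₂(4/3). Then for every real p with 1/2 ≤ p ≤ 1, one has p^{−λ} + p^{1−λ} ≤ 2. -/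
/-!
Multiplying by `p ^ l`, where `l = logb 2 (4 / 3)`, turns the claim into `(1 + p) / 2 ≤ p ^ l`.
Since `0 ≤ l ≤ 1`, the function `p ↦ p ^ l` is concave, so on `[1/2, 1]` it lies above its chord.
That chord is exactly `(1 + p) / 2`, because `(1/2) ^ l = 3/4` and `1 ^ l = 1`.
-/

theorem rpow_lambda_bound
    (p : ℝ) (hp : 1 / 2 ≤ p) (hp1 : p ≤ 1) :
    p ^ (-(Real.logb 2 (4 / 3))) + p ^ (1 - Real.logb 2 (4 / 3)) ≤ 2 := by
  have h2 : (2 : ℝ) ^ Real.logb 2 (4 / 3) = 4 / 3 :=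
    Real.rpow_logb (by norm_num) (by norm_num) (by norm_num)
  have hl0 : 0 ≤ Real.logb 2 (4 / 3) := Real.logb_nonneg (by norm_num) (by norm_num)
  have hl1 : Real.logb 2 (4 / 3) ≤ 1 := by
    rw [Real.logb_le_iff_le_rpow (by norm_num) (by norm_num)]
    norm_num
  generalize Real.logb 2 (4 / 3) = l at *
  have hp0 : 0 < p := by linarith
  have hhalf : (1 / 2 : ℝ) ^ l = 3 / 4 := by
    rw [Real.div_rpow (by norm_num) (by norm_num), h2, Real.one_rpow]
    norm_num
  have hchord : (1 + p) / 2 ≤ p ^ l := by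
    have h := (Real.concaveOn_rpow hl0 hl1).2
      (show (1 / 2 : ℝ) ∈ Set.Ici 0 by norm_num [Set.mem_Ici])
      (show (1 : ℝ) ∈ Set.Ici 0 by norm_num [Set.mem_Ici])
      (show 0 ≤ 2 - 2 * p by linarith) (show 0 ≤ 2 * p - 1 by linarith) (by ring)
    simp only [smul_eq_mul, hhalf, Real.one_rpow] at h
    rw [show (2 - 2 * p) * (1 / 2) + (2 * p - 1) * 1 = p by ring] at h
    linarith
  have hpos : 0 < p ^ l := Real.rpow_pos_of_pos hp0 l
  rw [Real.rpow_neg hp0.le, Real.rpow_sub hp0, Real.rpow_one, ← one_div, ← add_div,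
    div_le_iff₀ hpos]
  linarith
end

section
/- Fix α ∈ [0, 1/√2] and r ∈ [0,1]. Define, for x ∈ [0,1], f(α,x) = (α² − 1/4)·x, g(α,x) = (1/4)·√(x² + 8α²(2α² − 1)(x² − 1)), and h(α,x,r) = |f(α,x) + r·g(α,x)| + |f(α,x) − r·g(α,x)|. Then the function x ↦ h(α,x,r) is monotone nondecreasing on the interval [0,1]. (Note that the expression under the square root is nonnegative for x ∈ [0,1] and α ∈ [0,1/√2].) -/
/-!
Since `|u + v| + |u - v| = 2 max(|u|, |v|)`, the function `h` equals `2 max(|f|, r g)`.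
Here `|f| = |α² - 1/4| x` is nondecreasing for `x ≥ 0`, and so is `g`, because the coefficient
of `x²` in its radicand is `1 + 8α²(2α² - 1) = (4α² - 1)² ≥ 0`.
-/

/-- `f(α,x) = (α² − 1/4)·x`. -/
noncomputable def fFun (α x : ℝ) : ℝ := (α ^ 2 - 1 / 4) * x

/-- `g(α,x) = (1/4)·√(x² + 8α²(2α² − 1)(x² − 1))`. -/
noncomputable def gFun (α x : ℝ) : ℝ :=
  (1 / 4) * Real.sqrt (x ^ 2 + 8 * α ^ 2 * (2 * α ^ 2 - 1) * (x ^ 2 - 1))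

/-- `h(α,x,r) = |f + r·g| + |f − r·g|`. -/
noncomputable def hFun (α x r : ℝ) : ℝ :=
  |fFun α x + r * gFun α x| + |fFun α x - r * gFun α x|

lemma abs_add_add_abs_sub_eq_two_mul_max (u v : ℝ) :
    |u + v| + |u - v| = 2 * max |u| |v| := by
  grind

lemma abs_fFun_le {α x y : ℝ} (hx : 0 ≤ x) (hxy : x ≤ y) : |fFun α x| ≤ |fFun α y| := by
  unfold fFun
  rw [abs_mul, abs_mul, abs_of_nonneg hx, abs_of_nonneg (hx.trans hxy)]
  gcongr

lemma gFun_nonneg (α x : ℝ) : 0 ≤ gFun α x := by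
  unfold gFun
  positivity

lemma gFun_le {α x y : ℝ} (hx : 0 ≤ x) (hxy : x ≤ y) : gFun α x ≤ gFun α y := by
  unfold gFun
  have hsq : x ^ 2 ≤ y ^ 2 := by gcongr
  -- The difference of the two radicands is `(4α² - 1)² (y² - x²)`.
  have hdiff := mul_nonneg (sq_nonneg (4 * α ^ 2 - 1)) (sub_nonneg.2 hsq)
  gcongr ?_ * √?_
  linarith

theorem hFun_monotoneOn
    (α r : ℝ) (hα0 : 0 ≤ α) (hα : α ≤ 1 / Real.sqrt 2)
    (hr0 : 0 ≤ r) (hr1 : r ≤ 1) :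
    MonotoneOn (fun x => hFun α x r) (Set.Icc (0 : ℝ) 1) := by
  intro x hx y _ hxy
  simp only [hFun, abs_add_add_abs_sub_eq_two_mul_max]
  rw [abs_of_nonneg (mul_nonneg hr0 (gFun_nonneg α x)),
    abs_of_nonneg (mul_nonneg hr0 (gFun_nonneg α y))]
  have hf := abs_fFun_le (α := α) hx.1 hxy
  have hg := mul_le_mul_of_nonneg_left (gFun_le (α := α) hx.1 hxy) hr0
  linarith [max_le_max hf hg]
end

section
/- Fix α ∈ [0, 1/√2] and r ∈ [0,1]. Define, for x ∈ [0,1], f(α,x) = (α² − 1/4)·x, g(α,x) = (1/4)·√(x² + 8α²(2α² − 1)(x² − 1)), and h(α,x,r) = |f(α,x) + r·g(α,x)| + |f(α,x) − r·g(α,x)|. Then the function x ↦ h(α,x,r) is convex on the interval [0,1]. -/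
lemma abs_add_add_abs_sub_eq_max (a b : ℝ) : |a + b| + |a - b| = 2 * max |a| |b| := by
  rcases abs_cases (a + b) with h1 | h1 <;> rcases abs_cases (a - b) with h2 | h2 <;>
  rcases abs_cases a with h3 | h3 <;> rcases abs_cases b with h4 | h4 <;>
  rcases max_cases |a| |b| with h5 | h5 <;> linarith

lemma convexOn_sqrt_sq_add (p s : ℝ) (hs : 0 ≤ s) :
    ConvexOn ℝ Set.univ (fun x : ℝ => Real.sqrt (p ^ 2 * x ^ 2 + s)) := by
  refine ⟨convex_univ, fun x _ y _ a b ha hb hab => ?_⟩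
  simp only [smul_eq_mul]
  have hx : 0 ≤ p ^ 2 * x ^ 2 + s := by positivity
  have hy : 0 ≤ p ^ 2 * y ^ 2 + s := by positivity
  -- Cauchy–Schwarz for the vectors `(p x, √s)` and `(p y, √s)`.
  have key : p ^ 2 * (x * y) + s ≤
      Real.sqrt (p ^ 2 * x ^ 2 + s) * Real.sqrt (p ^ 2 * y ^ 2 + s) := by
    rw [← Real.sqrt_mul hx]
    apply Real.le_sqrt_of_sq_le
    nlinarith [mul_nonneg hs (sq_nonneg (p * (x - y)))]
  have hu := Real.sq_sqrt hx
  have hv := Real.sq_sqrt hy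
  apply Real.sqrt_le_iff.mpr
  refine ⟨by positivity, ?_⟩
  have h1 := mul_le_mul_of_nonneg_left key (mul_nonneg ha hb)
  have h2 : s = (a + b) ^ 2 * s := by rw [hab]; ring
  calc p ^ 2 * (a * x + b * y) ^ 2 + s
      = a ^ 2 * (p ^ 2 * x ^ 2 + s) + b ^ 2 * (p ^ 2 * y ^ 2 + s)
        + 2 * (a * b * (p ^ 2 * (x * y) + s)) := by
        conv_lhs => rw [h2]
        ring
    _ ≤ a ^ 2 * (p ^ 2 * x ^ 2 + s) + b ^ 2 * (p ^ 2 * y ^ 2 + s)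
        + 2 * (a * b * (Real.sqrt (p ^ 2 * x ^ 2 + s) * Real.sqrt (p ^ 2 * y ^ 2 + s))) := by
        linarith
    _ = _ := by
        rw [← hu, ← hv]
        simp only [Real.sqrt_sq (Real.sqrt_nonneg _)]
        ring

lemma convexOn_abs_fFun (α : ℝ) : ConvexOn ℝ Set.univ (fun x => |fFun α x|) := by
  refine ⟨convex_univ, fun x _ y _ a b ha hb _ => ?_⟩
  simp only [smul_eq_mul, fFun]
  calc |(α ^ 2 - 1 / 4) * (a * x + b * y)|
      = |a * ((α ^ 2 - 1 / 4) * x) + b * ((α ^ 2 - 1 / 4) * y)| := by congr 1; ring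
    _ ≤ _ := abs_add_le _ _
    _ = _ := by rw [abs_mul a, abs_mul b, abs_of_nonneg ha, abs_of_nonneg hb]

theorem hFun_convexOn
    (α r : ℝ) (hα0 : 0 ≤ α) (hα : α ≤ 1 / Real.sqrt 2)
    (hr0 : 0 ≤ r) (hr1 : r ≤ 1) :
    ConvexOn ℝ (Set.Icc (0 : ℝ) 1) (fun x => hFun α x r) := by
  have hsq : α ^ 2 ≤ 1 / 2 := by
    have h := pow_le_pow_left₀ hα0 hα 2
    rwa [div_pow, Real.sq_sqrt (by norm_num), one_pow] at h
  have hs : 0 ≤ 8 * α ^ 2 * (1 - 2 * α ^ 2) :=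
    mul_nonneg (by positivity) (by linarith)
  have hg := (convexOn_sqrt_sq_add (4 * α ^ 2 - 1) _ hs).smul
    (show 0 ≤ r * (1 / 4) by positivity)
  have hmax := ((convexOn_abs_fFun α).sup hg).smul (zero_le_two (α := ℝ))
  refine (hmax.subset (Set.subset_univ _) (convex_Icc 0 1)).congr fun x _ => ?_
  have hrad : x ^ 2 + 8 * α ^ 2 * (2 * α ^ 2 - 1) * (x ^ 2 - 1)
      = (4 * α ^ 2 - 1) ^ 2 * x ^ 2 + 8 * α ^ 2 * (1 - 2 * α ^ 2) := by ring
  have hg0 : 0 ≤ r * gFun α x := by unfold gFun; positivity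
  simp only [hFun, abs_add_add_abs_sub_eq_max, abs_of_nonneg hg0]
  simp only [gFun, hrad, Pi.sup_apply, smul_eq_mul]
  rw [mul_assoc r]
end

section
/- For α ∈ [0, 1/√2], define f(α) = 4α² − 1 and g(α) = √(1 − 16α⁴ + 8α²) (the expression under the square root is nonnegative on this range), and for r ∈ [0,1] define H(α,r) = |f(α) + r·g(α)| + |f(α) − r·g(α)|. Then sup over α ∈ [0, 1/√2] of H(α,r) equals max(2, 2√2·r); moreover this supremum is attained at α = 0 (with value 2) when r ≤ 1/√2, and at α = 1/2 (with value 2√2·r) when r ≥ 1/√2. -/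
/-!
Since `|a + b| + |a - b| = 2 max(|a|, |b|)`, we have `H = 2 max(|f|, r g)`. On `[0, 1/√2]` one has
`|f| ≤ 1`, and `g = √(2 - f²) ≤ √2`, so `H ≤ max(2, 2√2 r)`. The bound `2` is reached at `α = 0`,
where `f = -1` and `g = 1`, and the bound `2√2 r` at `α = 1/2`, where `f = 0` and `g = √2`.
-/

/-- `f(α) = 4α² − 1`. -/
noncomputable def fOne (α : ℝ) : ℝ := 4 * α ^ 2 - 1

/-- `g(α) = √(1 − 16α⁴ + 8α²)`. -/
noncomputable def gOne (α : ℝ) : ℝ := Real.sqrt (1 - 16 * α ^ 4 + 8 * α ^ 2)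

/-- `H(α,r) = |f(α) + r·g(α)| + |f(α) − r·g(α)|`. -/
noncomputable def HFun (α r : ℝ) : ℝ :=
  |fOne α + r * gOne α| + |fOne α - r * gOne α|

lemma HFun_zero {r : ℝ} (hr0 : 0 ≤ r) (hr1 : r ≤ 1) : HFun 0 r = 2 := by
  have hf : fOne 0 = -1 := by norm_num [fOne]
  have hg : gOne 0 = 1 := by norm_num [gOne]
  rw [HFun, hf, hg, abs_of_nonpos (by linarith), abs_of_nonpos (by linarith)]
  ring

lemma HFun_half {r : ℝ} (hr0 : 0 ≤ r) : HFun (1 / 2) r = 2 * Real.sqrt 2 * r := by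
  have hf : fOne (1 / 2) = 0 := by norm_num [fOne]
  have hg : gOne (1 / 2) = Real.sqrt 2 := by norm_num [gOne]
  have h : 0 ≤ r * Real.sqrt 2 := by positivity
  rw [HFun, hf, hg, zero_add, zero_sub, abs_neg, abs_of_nonneg h]
  ring

lemma gOne_le (α : ℝ) : gOne α ≤ Real.sqrt 2 :=
  Real.sqrt_le_sqrt (by nlinarith [sq_nonneg (4 * α ^ 2 - 1)])

lemma abs_fOne_le {α : ℝ} (hα : α ∈ Set.Icc (0 : ℝ) (1 / Real.sqrt 2)) : |fOne α| ≤ 1 := by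
  have h : α ^ 2 ≤ (1 / Real.sqrt 2) ^ 2 := pow_le_pow_left₀ hα.1 hα.2 2
  rw [div_pow, Real.sq_sqrt (by norm_num)] at h
  rw [fOne, abs_le]
  constructor <;> nlinarith [sq_nonneg α]

lemma HFun_le {α r : ℝ} (hr0 : 0 ≤ r) (hα : α ∈ Set.Icc (0 : ℝ) (1 / Real.sqrt 2)) :
    HFun α r ≤ max 2 (2 * Real.sqrt 2 * r) := by
  obtain ⟨h1, h2⟩ := abs_le.1 (abs_fOne_le hα)
  have hg : r * gOne α ≤ r * Real.sqrt 2 := mul_le_mul_of_nonneg_left (gOne_le α) hr0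
  have hg0 : 0 ≤ r * gOne α := mul_nonneg hr0 (Real.sqrt_nonneg _)
  have m1 := le_max_left 2 (2 * Real.sqrt 2 * r)
  have m2 := le_max_right 2 (2 * Real.sqrt 2 * r)
  rw [HFun]
  -- the four sign patterns give `2f`, `2rg`, `-2rg` and `-2f`
  rcases abs_cases (fOne α + r * gOne α) with ⟨e1, _⟩ | ⟨e1, _⟩ <;>
    rcases abs_cases (fOne α - r * gOne α) with ⟨e2, _⟩ | ⟨e2, _⟩ <;>
    rw [e1, e2] <;> linarith

theorem HFun_sup_two_peaks (r : ℝ) (hr0 : 0 ≤ r) (hr1 : r ≤ 1) :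
    sSup ((fun α => HFun α r) '' Set.Icc (0 : ℝ) (1 / Real.sqrt 2))
        = max 2 (2 * Real.sqrt 2 * r)
    ∧ (r ≤ 1 / Real.sqrt 2 →
        HFun 0 r = max 2 (2 * Real.sqrt 2 * r) ∧ HFun 0 r = 2)
    ∧ (1 / Real.sqrt 2 ≤ r →
        HFun (1 / 2) r = max 2 (2 * Real.sqrt 2 * r)
          ∧ HFun (1 / 2) r = 2 * Real.sqrt 2 * r) := by
  have hs : 0 < Real.sqrt 2 := by positivity
  have hs2 : Real.sqrt 2 ≤ 2 := Real.sqrt_le_iff.2 (by norm_num)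
  have m0 : (0 : ℝ) ∈ Set.Icc (0 : ℝ) (1 / Real.sqrt 2) := ⟨le_rfl, by positivity⟩
  have mh : (1 / 2 : ℝ) ∈ Set.Icc (0 : ℝ) (1 / Real.sqrt 2) :=
    ⟨by norm_num, one_div_le_one_div_of_le hs hs2⟩
  refine ⟨IsGreatest.csSup_eq ⟨?_, ?_⟩, fun h => ?_, fun h => ?_⟩
  · rcases max_choice 2 (2 * Real.sqrt 2 * r) with e | e <;> rw [e]
    · exact ⟨0, m0, HFun_zero hr0 hr1⟩
    · exact ⟨1 / 2, mh, HFun_half hr0⟩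
  · rintro _ ⟨α, hα, rfl⟩
    exact HFun_le hr0 hα
  · rw [le_div_iff₀ hs] at h
    rw [HFun_zero hr0 hr1, max_eq_left (by linarith)]
    exact ⟨rfl, rfl⟩
  · rw [div_le_iff₀ hs] at h
    rw [HFun_half hr0, max_eq_right (by linarith)]
    exact ⟨rfl, rfl⟩
end

section
/- Let α ∈ [0, 1/√2], set β = √(1/2 − α²), let x, z ≥ 0 with x² + z² ≤ 1, set y = √(1 − x² − z²), and let r ∈ [0,1]. Let |φ⟩⟨φ| = (I + x·X + y·Y + z·Z)/2 and F = β·I + (α − β)·|φ⟩⟨φ|, and define the 2×2 Hermitian matrix P = r·F Z F + (1−r)·Tr(F Z F)·I/2. Then the eigenvalues of P are exactly (1/4)·( (4α² − 1)·z − r·√(z² + 8α²(2α² − 1)(z² − 1)) ) and (1/4)·( (4α² − 1)·z + r·√(z² + 8α²(2α² − 1)(z² − 1)) ). -/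
/-!
A 2×2 matrix has characteristic polynomial `X² - (tr) X + det`, so only the trace and determinant
of `P` matter. Put `M = F Z F`. Since `x² + y² + z² = 1`, the operator `F` has eigenvalues `α` and
`β`, whence `det F = α β` and `det M = -α² β²`, while `tr M = (α² - β²) z`. The depolarization
`P = r M + (1 - r) (tr M / 2) I` keeps the trace and scales the distance of the eigenvalues from
their mean by `r`, so `det P = (tr M)² / 4 - r² ((tr M)² / 4 - det M)`. With `β² = 1/2 - α²` the
last bracket is one sixteenth of the radicand in the statement, which is in particular nonnegative.
-/

open scoped Matrix

/-- The Pauli matrix `X`. -/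
noncomputable def pauliX : Matrix (Fin 2) (Fin 2) ℂ := !![0, 1; 1, 0]
/-- The Pauli matrix `Y`. -/
noncomputable def pauliY : Matrix (Fin 2) (Fin 2) ℂ := !![0, -Complex.I; Complex.I, 0]
/-- The Pauli matrix `Z`. -/
noncomputable def pauliZ : Matrix (Fin 2) (Fin 2) ℂ := !![1, 0; 0, -1]

/-- The operator `b I + (a - b) |φ⟩⟨φ|`, with `|φ⟩⟨φ|` given by the Bloch vector `(x, y, z)`. -/
noncomputable def blochOperator (a b x y z : ℂ) : Matrix (Fin 2) (Fin 2) ℂ :=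
  b • (1 : Matrix (Fin 2) (Fin 2) ℂ) + (a - b) • (((1 : ℂ) / 2) •
    ((1 : Matrix (Fin 2) (Fin 2) ℂ) + x • pauliX + y • pauliY + z • pauliZ))

lemma blochOperator_eq (a b x y z : ℂ) :
    blochOperator a b x y z =
      !![b + (a - b) * (1 + z) / 2, (a - b) * (x - y * Complex.I) / 2;
         (a - b) * (x + y * Complex.I) / 2, b + (a - b) * (1 - z) / 2] := by
  ext i j
  fin_cases i <;> fin_cases j <;> simp [blochOperator, pauliX, pauliY, pauliZ] <;> ring

lemma det_blochOperator {a b x y z : ℂ} (h : x ^ 2 + y ^ 2 + z ^ 2 = 1) :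
    (blochOperator a b x y z).det = a * b := by
  rw [blochOperator_eq, Matrix.det_fin_two_of]
  linear_combination (-(a - b) ^ 2 / 4) * h + ((a - b) ^ 2 / 4 * y ^ 2) * Complex.I_sq

lemma det_conj_pauliZ {a b x y z : ℂ} (h : x ^ 2 + y ^ 2 + z ^ 2 = 1) :
    (blochOperator a b x y z * pauliZ * blochOperator a b x y z).det = -(a ^ 2 * b ^ 2) := by
  rw [Matrix.det_mul, Matrix.det_mul, det_blochOperator h, pauliZ, Matrix.det_fin_two_of]
  ring

lemma trace_conj_pauliZ (a b x y z : ℂ) :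
    (blochOperator a b x y z * pauliZ * blochOperator a b x y z).trace
      = (a ^ 2 - b ^ 2) * z := by
  rw [blochOperator_eq, pauliZ, Matrix.trace_fin_two]
  simp [Matrix.mul_apply, Fin.sum_univ_two]
  ring

/-- Mixing a 2×2 matrix with its normalized trace keeps the trace and scales the discriminant of
the characteristic polynomial by `r ^ 2`. -/
lemma charpoly_depolarized (M : Matrix (Fin 2) (Fin 2) ℂ) (r : ℂ) :
    (r • M + ((1 - r) * (M.trace / 2)) • (1 : Matrix (Fin 2) (Fin 2) ℂ)).charpoly =
      Polynomial.X ^ 2 - Polynomial.C M.trace * Polynomial.X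
        + Polynomial.C (M.trace ^ 2 / 4 - r ^ 2 * (M.trace ^ 2 / 4 - M.det)) := by
  rw [Matrix.charpoly_fin_two]
  congr 1
  · congr 3
    simp [Matrix.trace_fin_two]
    ring
  · congr 1
    simp [Matrix.det_fin_two, Matrix.trace_fin_two]
    ring

theorem eigenvalues_of_post_measurement_operator
    (α r x z : ℝ) (hα0 : 0 ≤ α) (hα : α ≤ 1 / Real.sqrt 2)
    (hr0 : 0 ≤ r) (hr1 : r ≤ 1)
    (hx0 : 0 ≤ x) (hz0 : 0 ≤ z) (hxz : x ^ 2 + z ^ 2 ≤ 1) :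
    let β : ℝ := Real.sqrt (1 / 2 - α ^ 2)
    let y : ℝ := Real.sqrt (1 - x ^ 2 - z ^ 2)
    let φφ : Matrix (Fin 2) (Fin 2) ℂ :=
      ((1 : ℂ) / 2) • ((1 : Matrix (Fin 2) (Fin 2) ℂ)
        + (x : ℂ) • pauliX + (y : ℂ) • pauliY + (z : ℂ) • pauliZ)
    let F : Matrix (Fin 2) (Fin 2) ℂ :=
      (β : ℂ) • (1 : Matrix (Fin 2) (Fin 2) ℂ) + ((α : ℂ) - (β : ℂ)) • φφ
    let P : Matrix (Fin 2) (Fin 2) ℂ :=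
      (r : ℂ) • (F * pauliZ * F)
        + (((1 : ℂ) - r) * ((F * pauliZ * F).trace / 2)) • (1 : Matrix (Fin 2) (Fin 2) ℂ)
    let lam₁ : ℝ := (1 / 4) * ((4 * α ^ 2 - 1) * z
      - r * Real.sqrt (z ^ 2 + 8 * α ^ 2 * (2 * α ^ 2 - 1) * (z ^ 2 - 1)))
    let lam₂ : ℝ := (1 / 4) * ((4 * α ^ 2 - 1) * z
      + r * Real.sqrt (z ^ 2 + 8 * α ^ 2 * (2 * α ^ 2 - 1) * (z ^ 2 - 1)))
    P.charpoly = (Polynomial.X - Polynomial.C (lam₁ : ℂ))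
      * (Polynomial.X - Polynomial.C (lam₂ : ℂ)) := by
  intro β y φφ F P lam₁ lam₂
  have hα2 : α ^ 2 ≤ 1 / 2 := by
    have h := pow_le_pow_left₀ hα0 hα 2
    rwa [div_pow, Real.sq_sqrt (by norm_num), one_pow] at h
  have hβ : (β : ℂ) ^ 2 = 1 / 2 - (α : ℂ) ^ 2 := by
    have h : β ^ 2 = 1 / 2 - α ^ 2 := Real.sq_sqrt (by linarith)
    simpa using congrArg Complex.ofReal h
  have hy : (x : ℂ) ^ 2 + (y : ℂ) ^ 2 + (z : ℂ) ^ 2 = 1 := by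
    have h : y ^ 2 = 1 - x ^ 2 - z ^ 2 := Real.sq_sqrt (by linarith)
    have h' : x ^ 2 + y ^ 2 + z ^ 2 = 1 := by linarith
    simpa using congrArg Complex.ofReal h'
  have hS0 : 0 ≤ z ^ 2 + 8 * α ^ 2 * (2 * α ^ 2 - 1) * (z ^ 2 - 1) := by
    -- The radicand equals `(4α² - 1)² z² + 8α² (1 - 2α²)`.
    have h : 0 ≤ α ^ 2 * (1 - 2 * α ^ 2) := mul_nonneg (sq_nonneg α) (by linarith)
    nlinarith [sq_nonneg ((4 * α ^ 2 - 1) * z)]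
  have hS := Real.sq_sqrt hS0
  have hsum : lam₁ + lam₂ = (2 * α ^ 2 - 1 / 2) * z := by
    simp only [lam₁, lam₂]
    ring
  have hprod : lam₁ * lam₂ = ((4 * α ^ 2 - 1) ^ 2 * z ^ 2
      - r ^ 2 * (z ^ 2 + 8 * α ^ 2 * (2 * α ^ 2 - 1) * (z ^ 2 - 1))) / 16 := by
    simp only [lam₁, lam₂]
    linear_combination (-r ^ 2 / 16) * hS
  have hsumC : (lam₁ : ℂ) + lam₂ = (2 * (α : ℂ) ^ 2 - 1 / 2) * z := by
    simpa using congrArg Complex.ofReal hsum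
  have hprodC : (lam₁ : ℂ) * lam₂ = ((4 * (α : ℂ) ^ 2 - 1) ^ 2 * (z : ℂ) ^ 2
      - (r : ℂ) ^ 2 * ((z : ℂ) ^ 2
        + 8 * (α : ℂ) ^ 2 * (2 * (α : ℂ) ^ 2 - 1) * ((z : ℂ) ^ 2 - 1))) / 16 := by
    simpa using congrArg Complex.ofReal hprod
  have hF : F = blochOperator α β x y z := rfl
  have htr : (F * pauliZ * F).trace = (lam₁ : ℂ) + lam₂ := by
    rw [hF, trace_conj_pauliZ, hβ, hsumC]
    ring
  have hdet : (F * pauliZ * F).trace ^ 2 / 4 - (r : ℂ) ^ 2 *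
      ((F * pauliZ * F).trace ^ 2 / 4 - (F * pauliZ * F).det) = (lam₁ : ℂ) * lam₂ := by
    rw [htr, hsumC, hprodC, hF, det_conj_pauliZ hy, hβ]
    ring
  have hP : P.charpoly = _ := charpoly_depolarized (F * pauliZ * F) r
  rw [hP, hdet, htr, Polynomial.C_add, Polynomial.C_mul]
  ring
end
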